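/- Let Λ ⊂ ℝ^d be a uniformly discrete set and let μ = Σ_{x∈Λ} c_x δ_x be a tempered measure with Σ_{x∈Λ} |c_x|² < ∞. Then the Fourier transform of μ in the tempered distribution sense is an absolutely continuous measure, i.e. there exists f ∈ L²_loc(ℝ^d) such that μ̂ = f·λ. -/

import Mathlib

open Real MeasureTheory SchwartzMap

/-!
The transform of `μ` is `f(y) = ∑ c_x e(-x·y)`, `e(t) = exp(2πit)`, and the point is that this
series converges in the weighted space `L²(w dy)`, `w(y) = (1 + ‖y‖)^(-2(d+1))`. Convergence there
gives `f ∈ L²_loc`, since `w` is bounded below on compact sets, and allows pairing with every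
Schwartz function `g`, since `g / √w` is again in `L²`; pairing termwise gives
`∫ g f = ∑ c_x ĝ(x) = ω ĝ`.

By completeness and `∑ |c_x|² < ∞`, convergence follows from the Bessel inequality
`∫ |∑_{x ∈ S} c_x e(-x·y)|² w(y) dy ≤ M ∑_{x ∈ S} |c_x|²`, uniform over finite `S ⊆ Λ`
(`weighted_bessel`). It is first proved with `w` replaced by a translate `φ(· - a)` of a smooth
bump `φ` (`local_bessel`): expanding the square leaves the matrix `φ̂(x - z)` up to unimodular
factors, whose entries are at most `K w(x - z)` because `φ̂` is a Schwartz function, and whose row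
sums are bounded uniformly because `Λ` is uniformly discrete (`sum_wt_le`); Schur's test concludes.
Since `w` varies by a bounded factor on unit balls, `w ≤ D · (w ∗ φ)`, and integrating the local
inequality against `w(a) da` gives the weighted one.
-/

/-! ### The weight and its sums over uniformly discrete sets -/

/-- The weight `(1 + ‖y‖)^(-2(d+1))`: integrable, and with a square root decaying polynomially. -/
noncomputable def wt (d : ℕ) (y : EuclideanSpace ℝ (Fin d)) : ℝ :=
  ((1 + ‖y‖) ^ (2 * (d + 1)))⁻¹

lemma wt_pos (d : ℕ) (y : EuclideanSpace ℝ (Fin d)) : 0 < wt d y := by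
  unfold wt; positivity

lemma continuous_wt (d : ℕ) : Continuous (wt d) := by
  unfold wt
  exact Continuous.inv₀ (by fun_prop) (fun y => by positivity)

lemma wt_le_one (d : ℕ) (y : EuclideanSpace ℝ (Fin d)) : wt d y ≤ 1 := by
  unfold wt
  exact inv_le_one_of_one_le₀ (one_le_pow₀ (by linarith [norm_nonneg y]))

lemma integrable_wt (d : ℕ) : Integrable (wt d) := by
  have h := integrable_one_add_norm (E := EuclideanSpace ℝ (Fin d)) (μ := volume)
    (r := ((2 * (d + 1) : ℕ) : ℝ)) (by
      rw [finrank_euclideanSpace_fin]; push_cast; linarith [Nat.cast_nonneg (α := ℝ) d])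
  refine h.congr (Filter.Eventually.of_forall fun y => ?_)
  simp only [wt]
  rw [Real.rpow_neg (by positivity), Real.rpow_natCast]

lemma wt_le_mul (d : ℕ) {y a : EuclideanSpace ℝ (Fin d)} (h : ‖y - a‖ ≤ 1) :
    wt d y ≤ 2 ^ (2 * (d + 1)) * wt d a := by
  have h1 : 1 + ‖a‖ ≤ 2 * (1 + ‖y‖) := by
    have := norm_sub_norm_le a y
    rw [norm_sub_rev] at this
    linarith [norm_nonneg y]
  have h2 : (1 + ‖a‖) ^ (2 * (d + 1)) ≤ 2 ^ (2 * (d + 1)) * (1 + ‖y‖) ^ (2 * (d + 1)) := by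
    rw [← mul_pow]; gcongr
  unfold wt
  rw [← div_eq_mul_inv, le_div_iff₀ (by positivity), inv_mul_le_iff₀ (by positivity)]
  linarith

/-- Sums of the weight over translates of a uniformly discrete set are uniformly bounded: each
`w(x - z)` is comparable to its average over a ball about `z`, and these balls are disjoint. -/
lemma sum_wt_le (d : ℕ) (Λ : Set (EuclideanSpace ℝ (Fin d)))
    (U : Set (EuclideanSpace ℝ (Fin d))) (hU : IsOpen U) (h0 : (0 : EuclideanSpace ℝ (Fin d)) ∈ U)
    (hdisc : ∀ x ∈ Λ, ∀ y ∈ Λ, x ≠ y →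
      Disjoint ((fun u => x + u) '' U) ((fun u => y + u) '' U)) :
    ∃ C : ℝ, 0 ≤ C ∧ ∀ (S : Finset Λ) (x : EuclideanSpace ℝ (Fin d)),
      ∑ z ∈ S, wt d (x - z) ≤ C := by
  obtain ⟨ε, hε, hεU⟩ := Metric.isOpen_iff.1 hU 0 h0
  set r := min ε 1 with hr
  have hr0 : 0 < r := lt_min hε one_pos
  set B : Λ → Set (EuclideanSpace ℝ (Fin d)) := fun z => Metric.ball (z : EuclideanSpace ℝ (Fin d)) r
  have hB : ∀ z z' : Λ, z ≠ z' → Disjoint (B z) (B z') := by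
    intro z z' hne
    have hsub : ∀ z : Λ, B z ⊆ (fun u => (z : EuclideanSpace ℝ (Fin d)) + u) '' U := by
      intro z y hy
      refine ⟨y - z, hεU ?_, by simp⟩
      rw [mem_ball_zero_iff]
      exact (mem_ball_iff_norm.1 hy).trans_le (min_le_left _ _)
    exact (hdisc z z.2 z' z'.2 (fun h => hne (Subtype.ext h))).mono (hsub z) (hsub z')
  set v : ℝ := volume.real (Metric.ball (0 : EuclideanSpace ℝ (Fin d)) r)
  have hv : 0 < v := ENNReal.toReal_pos (Metric.measure_ball_pos _ _ hr0).ne' measure_ball_lt_top.ne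
  have hvB : ∀ z, volume.real (B z) = v := fun z => by
    simp only [B, v, Measure.real, Measure.addHaar_ball_center]
  set I : ℝ := ∫ y, wt d y
  have hI : 0 ≤ I := integral_nonneg fun y => (wt_pos d y).le
  refine ⟨2 ^ (2 * (d + 1)) * I / v, by positivity, fun S x => ?_⟩
  have hint : Integrable (fun y => wt d (x - y)) := (integrable_wt d).comp_sub_left x
  have hz : ∀ z ∈ S, wt d (x - z) * v ≤ 2 ^ (2 * (d + 1)) * ∫ y in B z, wt d (x - y) := by
    intro z _
    rw [← hvB z, ← integral_const_mul]
    have : ∫ y in B z, wt d (x - z) = wt d (x - z) * volume.real (B z) := by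
      rw [setIntegral_const, smul_eq_mul, mul_comm]
    rw [← this]
    refine setIntegral_mono_on (integrableOn_const measure_ball_lt_top.ne)
      (hint.integrableOn.const_mul _) measurableSet_ball fun y hy => wt_le_mul d ?_
    have : x - (z : EuclideanSpace ℝ (Fin d)) - (x - y) = y - z := by abel
    rw [this]
    exact (mem_ball_iff_norm.1 hy).le.trans (min_le_right _ _)
  rw [le_div_iff₀ hv, Finset.sum_mul]
  calc ∑ z ∈ S, wt d (x - z) * v
      ≤ ∑ z ∈ S, 2 ^ (2 * (d + 1)) * ∫ y in B z, wt d (x - y) := Finset.sum_le_sum hz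
    _ = 2 ^ (2 * (d + 1)) * ∫ y in ⋃ z ∈ S, B z, wt d (x - y) := by
        rw [← Finset.mul_sum, integral_biUnion_finset S (fun z _ => measurableSet_ball)
          (fun z _ z' _ h => hB z z' h) (fun z _ => hint.integrableOn)]
    _ ≤ 2 ^ (2 * (d + 1)) * I := by
        gcongr
        refine (setIntegral_le_integral hint
          (Filter.Eventually.of_forall fun y => (wt_pos d _).le)).trans_eq ?_
        exact integral_sub_left_eq_self (wt d) volume x

/-! ### Characters and a bump function -/

/-- The character `y ↦ exp(-2πi⟨y, x⟩)`, with the sign of the Fourier transform. -/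
noncomputable def ch {d : ℕ} (x y : EuclideanSpace ℝ (Fin d)) : ℂ :=
  (Real.fourierChar (-(inner ℝ y x)) : ℂ)

lemma norm_ch {d : ℕ} (x y : EuclideanSpace ℝ (Fin d)) : ‖ch x y‖ = 1 := by
  exact Circle.norm_coe _

lemma continuous_ch {d : ℕ} (x : EuclideanSpace ℝ (Fin d)) : Continuous (ch x) := by
  unfold ch
  fun_prop

lemma ch_mul_conj {d : ℕ} (x z y : EuclideanSpace ℝ (Fin d)) :
    ch x y * (starRingEnd ℂ) (ch z y) = ch (x - z) y := by
  simp only [ch, ← Circle.coe_inv_eq_conj, ← Circle.coe_mul, ← AddChar.map_neg_eq_inv,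
    ← AddChar.map_add_eq_mul, inner_sub_right]
  congr 2; ring

lemma ch_add {d : ℕ} (x y a : EuclideanSpace ℝ (Fin d)) : ch x (y + a) = ch x y * ch x a := by
  simp only [ch, ← Circle.coe_mul, ← AddChar.map_add_eq_mul, inner_add_left]
  congr 2; ring

lemma fourier_eq_ch {d : ℕ} (g : EuclideanSpace ℝ (Fin d) → ℂ) (x : EuclideanSpace ℝ (Fin d)) :
    FourierTransform.fourier g x = ∫ y, ch x y * g y := by
  rw [Real.fourier_eq]
  simp [ch, Circle.smul_def]

/-- A smooth bump equal to `1` on the unit ball. Its Fourier transform is a Schwartz function,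
hence dominated by the weight. -/
lemma exists_bump (d : ℕ) : ∃ (φ : EuclideanSpace ℝ (Fin d) → ℝ) (K : ℝ),
    Continuous φ ∧ HasCompactSupport φ ∧ (∀ y, 0 ≤ φ y) ∧ (∀ y, ‖y‖ ≤ 1 → φ y = 1) ∧ 0 ≤ K ∧
    ∀ ξ, ‖∫ y, ch ξ y * (φ y : ℂ)‖ ≤ K * wt d ξ := by
  let b : ContDiffBump (0 : EuclideanSpace ℝ (Fin d)) := ⟨1, 2, one_pos, one_lt_two⟩
  have hc : HasCompactSupport (fun y => (b y : ℂ)) := b.hasCompactSupport.comp_left Complex.ofReal_zero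
  let g := hc.toSchwartzMap (Complex.ofRealCLM.contDiff.comp b.contDiff)
  refine ⟨b, 2 ^ (2 * (d + 1)) * (Finset.Iic (2 * (d + 1), 0)).sup
    (fun m => SchwartzMap.seminorm ℂ m.1 m.2) (FourierTransform.fourier g),
    b.continuous, b.hasCompactSupport, fun y => b.nonneg, fun y hy => ?_, by positivity,
    fun ξ => ?_⟩
  · exact b.one_of_mem_closedBall (by simpa [b] using hy)
  · have h := SchwartzMap.one_add_le_sup_seminorm_apply (𝕜 := ℂ) (m := (2 * (d + 1), 0))
      (k := 2 * (d + 1)) (n := 0) le_rfl le_rfl (FourierTransform.fourier g) ξ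
    rw [norm_iteratedFDeriv_zero, SchwartzMap.fourier_coe, fourier_eq_ch] at h
    rw [wt, ← div_eq_mul_inv, le_div_iff₀ (by positivity), mul_comm]
    exact h

/-! ### Bessel inequalities -/

/-- Bessel inequality for trigonometric polynomials with frequencies in `Λ`, localised near `a`;
the constant does not depend on `a`. The proof is Schur's test for the matrix
`∫ ch (x - z) φ(· - a)`. -/
lemma local_bessel {d : ℕ} {Λ : Set (EuclideanSpace ℝ (Fin d))}
    {φ : EuclideanSpace ℝ (Fin d) → ℝ} {K C : ℝ} (hφ : Continuous φ) (hφc : HasCompactSupport φ)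
    (hK0 : 0 ≤ K) (hK : ∀ ξ, ‖∫ y, ch ξ y * (φ y : ℂ)‖ ≤ K * wt d ξ)
    (hC : ∀ (S : Finset Λ) (x : EuclideanSpace ℝ (Fin d)), ∑ z ∈ S, wt d (x - z) ≤ C)
    (c : EuclideanSpace ℝ (Fin d) → ℂ) (S : Finset Λ) (a : EuclideanSpace ℝ (Fin d)) :
    ∫ y, ‖∑ x ∈ S, c x * ch (x : EuclideanSpace ℝ (Fin d)) y‖ ^ 2 * φ (y - a) ≤
      K * C * ∑ x ∈ S, ‖c x‖ ^ 2 := by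
  have hφint : Integrable (fun y => (φ (y - a) : ℂ)) :=
    ((hφ.integrable_of_hasCompactSupport hφc).comp_sub_right a).ofReal
  have hint : ∀ ξ : EuclideanSpace ℝ (Fin d), Integrable (fun y => ch ξ y * (φ (y - a) : ℂ)) :=
    fun ξ => hφint.bdd_mul (continuous_ch ξ).aestronglyMeasurable
      (Filter.Eventually.of_forall fun y => (norm_ch ξ y).le)
  -- translating `φ` only multiplies its Fourier transform by a unimodular factor
  have hshift : ∀ ξ : EuclideanSpace ℝ (Fin d),
      ‖∫ y, ch ξ y * (φ (y - a) : ℂ)‖ ≤ K * wt d ξ := by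
    intro ξ
    rw [← integral_add_right_eq_self _ a]
    have : ∀ y, ch ξ (y + a) * (φ (y + a - a) : ℂ) = ch ξ a * (ch ξ y * (φ y : ℂ)) := by
      intro y; rw [ch_add, add_sub_cancel_right]; ring
    simp_rw [this]
    rw [integral_const_mul, norm_mul, norm_ch, one_mul]
    exact hK ξ
  have hexp : ((∫ y, ‖∑ x ∈ S, c x * ch (x : EuclideanSpace ℝ (Fin d)) y‖ ^ 2 * φ (y - a) : ℝ) : ℂ)
      = ∑ x ∈ S, ∑ z ∈ S, c x * (starRingEnd ℂ) (c z) *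
        ∫ y, ch ((x : EuclideanSpace ℝ (Fin d)) - (z : EuclideanSpace ℝ (Fin d))) y * (φ (y - a) : ℂ) := by
    rw [← integral_complex_ofReal]
    simp_rw [← integral_const_mul]
    have hin : ∀ x ∈ S, ∑ z ∈ S, ∫ y, c x * (starRingEnd ℂ) (c z) *
          (ch ((x : EuclideanSpace ℝ (Fin d)) - (z : EuclideanSpace ℝ (Fin d))) y * (φ (y - a) : ℂ)) =
        ∫ y, ∑ z ∈ S, c x * (starRingEnd ℂ) (c z) *
          (ch ((x : EuclideanSpace ℝ (Fin d)) - (z : EuclideanSpace ℝ (Fin d))) y * (φ (y - a) : ℂ)) := fun x _ =>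
      (integral_finsetSum S fun (z : Λ) _ =>
        (hint ((x : EuclideanSpace ℝ (Fin d)) - (z : EuclideanSpace ℝ (Fin d)))).const_mul _).symm
    rw [Finset.sum_congr rfl hin, ← integral_finsetSum]
    · refine integral_congr_ae (Filter.Eventually.of_forall fun y => ?_)
      simp only [Complex.ofReal_mul, Complex.ofReal_pow]
      rw [← Complex.mul_conj', map_sum, Finset.sum_mul_sum, Finset.sum_mul]
      refine Finset.sum_congr rfl fun x _ => ?_
      rw [Finset.sum_mul]
      refine Finset.sum_congr rfl fun z _ => ?_
      rw [← ch_mul_conj, map_mul]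
      ring
    · intro x _
      exact integrable_finsetSum _ fun z _ => (hint ((x : EuclideanSpace ℝ (Fin d)) - (z : EuclideanSpace ℝ (Fin d)))).const_mul _
  have hsymm : ∀ x z : EuclideanSpace ℝ (Fin d), wt d (x - z) = wt d (z - x) := fun x z => by
    simp only [wt, norm_sub_rev]
  refine (le_abs_self _).trans ?_
  rw [← Real.norm_eq_abs, ← Complex.norm_real, hexp]
  calc _ ≤ ∑ x ∈ S, ∑ z ∈ S, ‖c x‖ * ‖c z‖ * (K * wt d ((x : EuclideanSpace ℝ (Fin d)) - (z : EuclideanSpace ℝ (Fin d)))) := by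
        refine (norm_sum_le _ _).trans (Finset.sum_le_sum fun x _ =>
          (norm_sum_le _ _).trans (Finset.sum_le_sum fun z _ => ?_))
        rw [norm_mul, norm_mul, RCLike.norm_conj]
        gcongr
        exact hshift _
    _ ≤ ∑ x ∈ S, ∑ z ∈ S, (‖c x‖ ^ 2 / 2 * (K * wt d (x - z)) + ‖c z‖ ^ 2 / 2 * (K * wt d (z - x))) := by
        refine Finset.sum_le_sum fun x _ => Finset.sum_le_sum fun z _ => ?_
        rw [hsymm z x, ← add_mul]
        have := wt_pos d ((x : EuclideanSpace ℝ (Fin d)) - (z : EuclideanSpace ℝ (Fin d)))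
        gcongr
        nlinarith [sq_nonneg (‖c x‖ - ‖c z‖)]
    _ = ∑ x ∈ S, ∑ z ∈ S, ‖c x‖ ^ 2 * (K * wt d (x - z)) := by
        simp_rw [Finset.sum_add_distrib]
        rw [Finset.sum_comm (f := fun x z : Λ => ‖c z‖ ^ 2 / 2 * (K * wt d (z - x))),
          ← Finset.sum_add_distrib]
        refine Finset.sum_congr rfl fun x _ => ?_
        rw [← Finset.sum_add_distrib]
        exact Finset.sum_congr rfl fun z _ => by ring
    _ ≤ K * C * ∑ x ∈ S, ‖c x‖ ^ 2 := by
        rw [Finset.mul_sum]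
        refine Finset.sum_le_sum fun x _ => ?_
        rw [← Finset.mul_sum, ← Finset.mul_sum, mul_comm]
        gcongr
        exact hC S x

/-- Bessel inequality for the weight, by integrating `local_bessel` over `a` against `wt d a`. -/
lemma weighted_bessel {d : ℕ} {Λ : Set (EuclideanSpace ℝ (Fin d))}
    {U : Set (EuclideanSpace ℝ (Fin d))} (hU : IsOpen U) (h0 : (0 : EuclideanSpace ℝ (Fin d)) ∈ U)
    (hdisc : ∀ x ∈ Λ, ∀ y ∈ Λ, x ≠ y →
      Disjoint ((fun u => x + u) '' U) ((fun u => y + u) '' U))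
    (c : EuclideanSpace ℝ (Fin d) → ℂ) :
    ∃ M : ℝ, 0 ≤ M ∧ ∀ S : Finset Λ,
      ∫⁻ y, ENNReal.ofReal (‖∑ x ∈ S, c x * ch (x : EuclideanSpace ℝ (Fin d)) y‖ ^ 2 * wt d y) ≤
        ENNReal.ofReal (M * ∑ x ∈ S, ‖c x‖ ^ 2) := by
  obtain ⟨φ, K, hφ, hφc, hφ0, hφ1, hK0, hK⟩ := exists_bump d
  obtain ⟨C, hC0, hC⟩ := sum_wt_le d Λ U hU h0 hdisc
  set v : ℝ := volume.real (Metric.closedBall (0 : EuclideanSpace ℝ (Fin d)) 1)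
  have hv : 0 < v := ENNReal.toReal_pos (Metric.measure_closedBall_pos _ _ one_pos).ne'
    measure_closedBall_lt_top.ne
  set I : ℝ := ∫ y, wt d y with hI_def
  have hI : 0 ≤ I := integral_nonneg fun y => (wt_pos d y).le
  set D : ℝ := 2 ^ (2 * (d + 1)) / v with hD
  have hD0 : 0 ≤ D := by positivity
  refine ⟨D * (I * (K * C)), by positivity, fun S => ?_⟩
  set P : EuclideanSpace ℝ (Fin d) → ℝ :=
    fun y => ‖∑ x ∈ S, c x * ch (x : EuclideanSpace ℝ (Fin d)) y‖ ^ 2 with hP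
  have hPc : Continuous P :=
    (continuous_norm.comp (continuous_finsetSum _ fun x _ =>
      continuous_const.mul (continuous_ch _))).pow 2
  have hP0 : ∀ y, 0 ≤ P y := fun y => by positivity
  have hwc := continuous_wt d
  have hw0 : ∀ y, 0 ≤ wt d y := fun y => (wt_pos d y).le
  -- the weight is dominated by its average over unit balls
  have hdom : ∀ y, ENNReal.ofReal (wt d y) ≤
      ENNReal.ofReal D * ∫⁻ a, ENNReal.ofReal (wt d a * φ (y - a)) := by
    intro y
    have hvy : volume (Metric.closedBall y 1) = ENNReal.ofReal v := by
      rw [Measure.addHaar_closedBall_center]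
      exact (ENNReal.ofReal_toReal measure_closedBall_lt_top.ne).symm
    have h1 : ENNReal.ofReal ((2 ^ (2 * (d + 1)))⁻¹ * wt d y) * ENNReal.ofReal v ≤
        ∫⁻ a, ENNReal.ofReal (wt d a * φ (y - a)) := by
      rw [← hvy, ← setLIntegral_const]
      refine (setLIntegral_mono' measurableSet_closedBall fun a ha => ?_).trans
        (setLIntegral_le_lintegral _ _)
      have hya : ‖y - a‖ ≤ 1 := by rw [norm_sub_rev]; exact mem_closedBall_iff_norm.1 ha
      refine ENNReal.ofReal_le_ofReal ?_
      rw [hφ1 _ hya, mul_one, inv_mul_le_iff₀ (by positivity)]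
      exact wt_le_mul d hya
    calc ENNReal.ofReal (wt d y)
        = ENNReal.ofReal D * (ENNReal.ofReal ((2 ^ (2 * (d + 1)))⁻¹ * wt d y) * ENNReal.ofReal v) := by
          rw [← ENNReal.ofReal_mul (mul_nonneg (by positivity) (hw0 y)), ← ENNReal.ofReal_mul hD0, hD]
          congr 1; field_simp
      _ ≤ _ := by gcongr
  calc ∫⁻ y, ENNReal.ofReal (P y * wt d y)
      ≤ ∫⁻ y, ENNReal.ofReal D * ∫⁻ a, ENNReal.ofReal (P y * (wt d a * φ (y - a))) := by
        refine lintegral_mono fun y => ?_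
        simp_rw [ENNReal.ofReal_mul (hP0 y)]
        rw [lintegral_const_mul _ (by fun_prop), mul_left_comm]
        gcongr
        exact hdom y
    _ = ENNReal.ofReal D * ∫⁻ a, ∫⁻ y, ENNReal.ofReal (P y * (wt d a * φ (y - a))) := by
        rw [lintegral_const_mul' _ _ ENNReal.ofReal_ne_top, lintegral_lintegral_swap]
        exact (ENNReal.measurable_ofReal.comp (Continuous.measurable (by fun_prop))).aemeasurable
    _ ≤ ENNReal.ofReal D * ∫⁻ a, ENNReal.ofReal (wt d a) *
          ENNReal.ofReal (K * C * ∑ x ∈ S, ‖c x‖ ^ 2) := by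
        gcongr with a
        simp_rw [mul_left_comm (P _), ENNReal.ofReal_mul (hw0 a)]
        rw [lintegral_const_mul _ (by fun_prop)]
        gcongr
        rw [← ofReal_integral_eq_lintegral_ofReal]
        · exact ENNReal.ofReal_le_ofReal (local_bessel hφ hφc hK0 hK hC c S a)
        · refine Continuous.integrable_of_hasCompactSupport (by fun_prop) ?_
          exact (hφc.comp_homeomorph (Homeomorph.subRight a)).mul_left
        · exact Filter.Eventually.of_forall fun y => mul_nonneg (hP0 y) (hφ0 _)
    _ = ENNReal.ofReal (D * (I * (K * C)) * ∑ x ∈ S, ‖c x‖ ^ 2) := by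
        rw [lintegral_mul_const _ (by fun_prop), ← ofReal_integral_eq_lintegral_ofReal
          (integrable_wt d) (Filter.Eventually.of_forall hw0), ← hI_def,
          ← ENNReal.ofReal_mul hI, ← ENNReal.ofReal_mul hD0]
        congr 1; ring

/-! ### Convergence in `L²` -/

/-- The square root of the weight `wt`. -/
noncomputable def sw (d : ℕ) (y : EuclideanSpace ℝ (Fin d)) : ℝ :=
  ((1 + ‖y‖) ^ (d + 1))⁻¹

lemma sw_pos (d : ℕ) (y : EuclideanSpace ℝ (Fin d)) : 0 < sw d y := by
  unfold sw; positivity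

lemma sw_sq (d : ℕ) (y : EuclideanSpace ℝ (Fin d)) : sw d y ^ 2 = wt d y := by
  rw [sw, wt, inv_pow, ← pow_mul, mul_comm]

lemma continuous_sw (d : ℕ) : Continuous (sw d) := by
  unfold sw
  exact Continuous.inv₀ (by fun_prop) (fun y => by positivity)

lemma memLp_sw (d : ℕ) : MemLp (sw d) 2 := by
  rw [memLp_two_iff_integrable_sq_norm (continuous_sw d).aestronglyMeasurable]
  refine (integrable_wt d).congr (Filter.Eventually.of_forall fun y => ?_)
  simp only [Real.norm_eq_abs, sq_abs, sw_sq]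

lemma memLp_ch {d : ℕ} (x : EuclideanSpace ℝ (Fin d)) :
    MemLp (fun y => ch x y * (sw d y : ℂ)) 2 := by
  refine (memLp_sw d).of_le ((continuous_ch x).mul
    (Complex.continuous_ofReal.comp (continuous_sw d))).aestronglyMeasurable
    (Filter.Eventually.of_forall fun y => ?_)
  simp [norm_ch]

/-- The vector of `L²` representing integration of a Schwartz function against `F / √w`, for
`F ∈ L²`. -/
lemma memLp_test {d : ℕ} (g : SchwartzMap (EuclideanSpace ℝ (Fin d)) ℂ) :
    MemLp (fun y => (starRingEnd ℂ) (g y) * ((sw d y)⁻¹ : ℂ)) 2 := by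
  have hg := g.continuous
  refine (memLp_sw d).of_le_mul (c := 2 ^ (2 * (d + 1)) * (Finset.Iic (2 * (d + 1), 0)).sup
    (fun m => SchwartzMap.seminorm ℂ m.1 m.2) g) ?_ (Filter.Eventually.of_forall fun y => ?_)
  · refine Continuous.aestronglyMeasurable ((Complex.continuous_conj.comp hg).mul ?_)
    exact (Complex.continuous_ofReal.comp (continuous_sw d)).inv₀
      fun y => Complex.ofReal_ne_zero.2 (sw_pos d y).ne'
  · have h := SchwartzMap.one_add_le_sup_seminorm_apply (𝕜 := ℂ) (m := (2 * (d + 1), 0))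
      (k := 2 * (d + 1)) (n := 0) le_rfl le_rfl g y
    rw [norm_iteratedFDeriv_zero] at h
    have hs : (1 + ‖y‖) ^ (2 * (d + 1)) = (sw d y)⁻¹ * (sw d y)⁻¹ := by
      rw [sw, inv_inv, ← pow_add]; congr 1; ring
    rw [hs] at h
    have hp := sw_pos d y
    rw [norm_mul, RCLike.norm_conj, norm_inv, Complex.norm_real, Real.norm_of_nonneg hp.le]
    calc ‖g y‖ * (sw d y)⁻¹ = ((sw d y)⁻¹ * (sw d y)⁻¹ * ‖g y‖) * sw d y := by field_simp
      _ ≤ _ := by gcongr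

/-- The series `∑ c_x e(-x·y) √w(y)` converges unconditionally in the unweighted `L²`. -/
lemma summable_ch {d : ℕ} {Λ : Set (EuclideanSpace ℝ (Fin d))}
    {U : Set (EuclideanSpace ℝ (Fin d))} (hU : IsOpen U) (h0 : (0 : EuclideanSpace ℝ (Fin d)) ∈ U)
    (hdisc : ∀ x ∈ Λ, ∀ y ∈ Λ, x ≠ y →
      Disjoint ((fun u => x + u) '' U) ((fun u => y + u) '' U))
    (c : EuclideanSpace ℝ (Fin d) → ℂ)
    (hsum : Summable (fun x : Λ => ‖c x‖ ^ 2)) :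
    Summable (fun x : Λ => c x • (memLp_ch (x : EuclideanSpace ℝ (Fin d))).toLp) := by
  obtain ⟨M, hM0, hM⟩ := weighted_bessel hU h0 hdisc c
  have hbd : ∀ S : Finset Λ, ‖∑ x ∈ S, c x • (memLp_ch (x : EuclideanSpace ℝ (Fin d))).toLp‖ ^ 2 ≤
      M * ∑ x ∈ S, ‖c x‖ ^ 2 := by
    intro S
    set G : Lp ℂ 2 (volume : Measure (EuclideanSpace ℝ (Fin d))) :=
      ∑ x ∈ S, c x • (memLp_ch (x : EuclideanSpace ℝ (Fin d))).toLp with hG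
    have hae : ∀ᵐ y, ‖G y‖ₑ ^ (2 : ℝ) =
        ENNReal.ofReal (‖∑ x ∈ S, c x * ch (x : EuclideanSpace ℝ (Fin d)) y‖ ^ 2 * wt d y) := by
      have h1 : ∀ᵐ y, ∀ x ∈ S, (c x • (memLp_ch (x : EuclideanSpace ℝ (Fin d))).toLp :
          Lp ℂ 2 (volume : Measure (EuclideanSpace ℝ (Fin d)))) y =
          c x * (ch (x : EuclideanSpace ℝ (Fin d)) y * (sw d y : ℂ)) := by
        refine (Filter.eventually_all_finset S).2 fun x _ => ?_
        filter_upwards [Lp.coeFn_smul (c x) (memLp_ch (x : EuclideanSpace ℝ (Fin d))).toLp,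
          (memLp_ch (x : EuclideanSpace ℝ (Fin d))).coeFn_toLp] with y h1 h2
        rw [h1, Pi.smul_apply, h2, smul_eq_mul]
      filter_upwards [h1, Lp.coeFn_finsetSum S fun x : Λ =>
        c x • (memLp_ch (x : EuclideanSpace ℝ (Fin d))).toLp] with y h1 h2
      have h3 : G y = (∑ x ∈ S, c x * ch (x : EuclideanSpace ℝ (Fin d)) y) * (sw d y : ℂ) := by
        rw [hG, h2, Finset.sum_apply, Finset.sum_congr rfl h1, Finset.sum_mul]
        exact Finset.sum_congr rfl fun x _ => by ring
      rw [h3, ← ofReal_norm, ENNReal.rpow_two, ← ENNReal.ofReal_pow (norm_nonneg _),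
        norm_mul, mul_pow, Complex.norm_real, Real.norm_eq_abs, sq_abs, sw_sq]
    have h4 : ENNReal.ofReal (‖G‖ ^ 2) = ∫⁻ y, ‖G y‖ₑ ^ (2 : ℝ) := by
      rw [ENNReal.ofReal_pow (norm_nonneg _), ofReal_norm, Lp.enorm_def,
        eLpNorm_eq_lintegral_rpow_enorm_toReal (by norm_num) (by norm_num), ← ENNReal.rpow_two,
        ← ENNReal.rpow_mul]
      norm_num
    refine (ENNReal.ofReal_le_ofReal_iff (mul_nonneg hM0
      (Finset.sum_nonneg fun x _ => by positivity))).1 ?_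
    rw [h4, lintegral_congr_ae hae]
    exact hM S
  rw [summable_iff_vanishing_norm]
  intro ε hε
  obtain ⟨s, hs⟩ := summable_iff_vanishing_norm.1 hsum (ε ^ 2 / (M + 1)) (by positivity)
  refine ⟨s, fun t ht => lt_of_pow_lt_pow_left₀ 2 hε.le ((hbd t).trans_lt ?_)⟩
  have h := hs t ht
  rw [Real.norm_of_nonneg (Finset.sum_nonneg fun x _ => by positivity),
    lt_div_iff₀ (by positivity)] at h
  nlinarith [Finset.sum_nonneg fun (x : Λ) (_ : x ∈ t) => sq_nonneg ‖c x‖]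

/-! ### The Fourier transform of `μ` -/

/-- Corollary 5.12: let `Λ ⊂ ℝ^d` be uniformly discrete and `μ = Σ_{x∈Λ} c_x δ_x` a tempered
measure (viewed as the tempered distribution `ω : g ↦ Σ_{x∈Λ} c_x g(x)`) with
`Σ_{x∈Λ} |c_x|² < ∞`. Then the Fourier transform of `μ` in the tempered distribution sense is
an absolutely continuous measure: there is `f ∈ L²_loc(ℝ^d)` with `μ̂ = f·λ`. -/
theorem stmt17 (d : ℕ) (Λ : Set (EuclideanSpace ℝ (Fin d)))
    (U : Set (EuclideanSpace ℝ (Fin d))) (hU : IsOpen U) (h0 : (0 : EuclideanSpace ℝ (Fin d)) ∈ U)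
    (hdisc : ∀ x ∈ Λ, ∀ y ∈ Λ, x ≠ y →
      Disjoint ((fun u => x + u) '' U) ((fun u => y + u) '' U))
    (c : EuclideanSpace ℝ (Fin d) → ℂ)
    (hsum : Summable (fun x : Λ => ‖c x‖ ^ 2))
    (ω : SchwartzMap (EuclideanSpace ℝ (Fin d)) ℂ →L[ℂ] ℂ)
    (hω : ∀ g : SchwartzMap (EuclideanSpace ℝ (Fin d)) ℂ, ω g = ∑' x : Λ, c x * g x) :
    ∃ f : EuclideanSpace ℝ (Fin d) → ℂ,
      AEStronglyMeasurable f volume ∧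
      (∀ K : Set (EuclideanSpace ℝ (Fin d)), IsCompact K →
        (∫⁻ x in K, ‖f x‖₊ ^ 2 ∂volume) < ⊤) ∧
      (∀ g : SchwartzMap (EuclideanSpace ℝ (Fin d)) ℂ,
        ω (SchwartzMap.fourierTransformCLM ℂ g) = ∫ x, g x * f x) := by
  obtain ⟨F, hF⟩ := summable_ch hU h0 hdisc c hsum
  have hcont : Continuous fun y => ((sw d y)⁻¹ : ℂ) :=
    (Complex.continuous_ofReal.comp (continuous_sw d)).inv₀
      fun y => Complex.ofReal_ne_zero.2 (sw_pos d y).ne'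
  refine ⟨fun y => F y * ((sw d y)⁻¹ : ℂ),
    (Lp.aestronglyMeasurable F).mul hcont.aestronglyMeasurable, fun K hK => ?_, fun g => ?_⟩
  · obtain ⟨B, hB⟩ := hK.exists_bound_of_continuousOn hcont.continuousOn
    have hFint : ∫⁻ y, ‖F y‖ₑ ^ (2 : ℝ) < ⊤ := by
      have := lintegral_rpow_enorm_lt_top_of_eLpNorm_lt_top (by norm_num) (by norm_num)
        (Lp.memLp F).2
      simpa using this
    calc ∫⁻ y in K, (‖F y * ((sw d y)⁻¹ : ℂ)‖₊ : ENNReal) ^ 2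
        ≤ ∫⁻ y in K, ENNReal.ofReal B ^ 2 * ‖F y‖ₑ ^ (2 : ℝ) := by
          refine setLIntegral_mono' hK.measurableSet fun y hy => ?_
          rw [← enorm_eq_nnnorm, enorm_mul, mul_pow, mul_comm, ENNReal.rpow_two]
          gcongr
          rw [← ofReal_norm]
          exact ENNReal.ofReal_le_ofReal (hB y hy)
      _ ≤ ∫⁻ y, ENNReal.ofReal B ^ 2 * ‖F y‖ₑ ^ (2 : ℝ) := setLIntegral_le_lintegral _ _
      _ < ⊤ := by
          rw [lintegral_const_mul' _ _ (by finiteness)]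
          exact ENNReal.mul_lt_top (by finiteness) hFint
  · set H := (memLp_test g).toLp
    have hpair := hF.mapL (innerSL ℂ H)
    have hs0 : ∀ y, (sw d y : ℂ) ≠ 0 := fun y => Complex.ofReal_ne_zero.2 (sw_pos d y).ne'
    have hterm : ∀ x : Λ, innerSL ℂ H (c x • (memLp_ch (x : EuclideanSpace ℝ (Fin d))).toLp) =
        c x * SchwartzMap.fourierTransformCLM ℂ g x := by
      intro x
      have : SchwartzMap.fourierTransformCLM ℂ g x = ∫ y, ch (x : EuclideanSpace ℝ (Fin d)) y * g y := by
        rw [← fourier_eq_ch, ← SchwartzMap.fourier_coe]; rfl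
      rw [this, map_smul, smul_eq_mul, innerSL_apply_apply, L2.inner_def]
      congr 1
      refine integral_congr_ae ?_
      filter_upwards [(memLp_test g).coeFn_toLp,
        (memLp_ch (x : EuclideanSpace ℝ (Fin d))).coeFn_toLp] with y h1 h2
      rw [h1, h2, RCLike.inner_apply, map_mul, Complex.conj_conj, map_inv₀, Complex.conj_ofReal]
      field_simp [hs0 y]
    have hlim : innerSL ℂ H F = ∫ y, g y * (F y * ((sw d y)⁻¹ : ℂ)) := by
      rw [innerSL_apply_apply, L2.inner_def]
      refine integral_congr_ae ?_
      filter_upwards [(memLp_test g).coeFn_toLp] with y h1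
      rw [h1, RCLike.inner_apply, map_mul, Complex.conj_conj, map_inv₀, Complex.conj_ofReal]
      ring
    rw [hω, ← hlim, ← hpair.tsum_eq]
    exact tsum_congr fun x => (hterm x).symm
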